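/- arXiv:2508.16986 — 2 statements merged into one kernel-verified Lean document; each statement's English description precedes it below -/
import Mathlib

section
/- Let F = (A, R) be a finitary argumentation framework. If F has infinitely many pairwise distinct finite stable extensions, then F has an infinite stable extension. -/
namespace AF

variable {α : Type*}

/-- `S` is conflict-free: no argument in `S` attacks another argument in `S`. -/
def ConflictFree (R : α → α → Prop) (S : Set α) : Prop :=
  ∀ a ∈ S, ∀ b ∈ S, ¬ R a b

/-- `S` defends the argument `a`: every attacker of `a` is attacked by some element of `S`. -/
def Defends (R : α → α → Prop) (S : Set α) (a : α) : Prop :=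
  ∀ x, R x a → ∃ y ∈ S, R y x

/-- `S` is admissible: conflict-free and defends each of its elements. -/
def Admissible (R : α → α → Prop) (S : Set α) : Prop :=
  ConflictFree R S ∧ ∀ a ∈ S, Defends R S a

/-- `S` is stable: conflict-free and attacks every argument outside of `S`. -/
def Stable (R : α → α → Prop) (S : Set α) : Prop :=
  ConflictFree R S ∧ ∀ a, a ∉ S → ∃ b ∈ S, R b a

/-- `S` is complete: conflict-free and equal to the set of arguments it defends. -/
def Complete (R : α → α → Prop) (S : Set α) : Prop :=
  ConflictFree R S ∧ S = {a | Defends R S a}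

/-- `S` is naive: conflict-free and no proper superset of `S` is conflict-free. -/
def Naive (R : α → α → Prop) (S : Set α) : Prop :=
  ConflictFree R S ∧ ∀ T : Set α, S ⊆ T → ConflictFree R T → T = S

/-- The framework is finitary: each argument has only finitely many attackers. -/
def Finitary (R : α → α → Prop) : Prop :=
  ∀ a : α, {x : α | R x a}.Finite

/-!
Take the limit of infinitely many stable extensions along a nonprincipal ultrafilter. On any finite
set of arguments the limit agrees with most of the extensions, and finitariness makes stability at
an argument depend on finitely many arguments only, so the limit is stable. Were it finite, most of
the extensions would contain it, hence equal it by maximality of stable sets, which contradicts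
nonprincipality.
-/

theorem Stable.naive {R : α → α → Prop} {S : Set α} (hS : Stable R S) : Naive R S := by
  refine ⟨hS.1, fun T hST hT => (hST.antisymm fun a haT => ?_).symm⟩
  by_contra haS
  obtain ⟨b, hbS, hba⟩ := hS.2 a haS
  exact hT b (hST hbS) a haT hba

/-- The limit of an ultrafilter on `Set α`, where sets are identified with points of the product
space `{0, 1}^α`: an element belongs to the limit if it belongs to `U`-most sets. It serves to
pass to limits of extensions. -/
def ultralimit (U : Ultrafilter (Set α)) : Set α :=
  {a | ∀ᶠ T : Set α in U, a ∈ T}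

section ultralimit

variable {R : α → α → Prop} {U : Ultrafilter (Set α)}

theorem eventually_mem_iff_mem_ultralimit (U : Ultrafilter (Set α)) (a : α) :
    ∀ᶠ T : Set α in U, a ∈ T ↔ a ∈ ultralimit U := by
  by_cases ha : a ∈ ultralimit U
  · exact Filter.Eventually.mono ha fun _ haT => iff_of_true haT ha
  · exact (Ultrafilter.eventually_not.2 ha).mono fun _ haT => iff_of_false haT ha

theorem eventually_forall_mem_iff_mem_ultralimit (U : Ultrafilter (Set α)) {F : Set α}
    (hF : F.Finite) : ∀ᶠ T : Set α in U, ∀ a ∈ F, (a ∈ T ↔ a ∈ ultralimit U) :=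
  (Filter.eventually_all_finite hF).2 fun a _ => eventually_mem_iff_mem_ultralimit U a

theorem conflictFree_ultralimit (hU : ∀ᶠ T in U, ConflictFree R T) :
    ConflictFree R (ultralimit U) := by
  intro a ha b hb
  obtain ⟨T, hT, haT, hbT⟩ := (hU.and (Filter.Eventually.and ha hb)).exists
  exact hT a haT b hbT

theorem Finitary.stable_ultralimit (hR : Finitary R) (hU : ∀ᶠ T in U, Stable R T) :
    Stable R (ultralimit U) := by
  refine ⟨conflictFree_ultralimit (hU.mono fun _ hT => hT.1), fun a ha => ?_⟩
  obtain ⟨T, hT, haT, hattackers⟩ := (hU.and ((eventually_mem_iff_mem_ultralimit U a).and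
    (eventually_forall_mem_iff_mem_ultralimit U (hR a)))).exists
  obtain ⟨b, hbT, hba⟩ := hT.2 a (mt haT.1 ha)
  exact ⟨b, (hattackers b hba).1 hbT, hba⟩

theorem Naive.eventually_eq_ultralimit (hnaive : Naive R (ultralimit U))
    (hfinite : (ultralimit U).Finite) (hU : ∀ᶠ T in U, ConflictFree R T) :
    ∀ᶠ T in U, T = ultralimit U := by
  filter_upwards [hU, eventually_forall_mem_iff_mem_ultralimit U hfinite] with T hT hmem
  exact hnaive.2 T (fun a ha => (hmem a ha).2 ha) hT

end ultralimit

theorem infinitely_many_finite_stable_implies_infinite_stable_general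
    (R : α → α → Prop) (hfin : Finitary R) (h : {S : Set α | Stable R S}.Infinite) :
    ∃ S : Set α, S.Infinite ∧ Stable R S := by
  have := h.cofinite_inf_principal_neBot
  obtain ⟨U, hU⟩ := Ultrafilter.exists_le (Filter.cofinite ⊓ Filter.principal {S | Stable R S})
  obtain ⟨hcofinite, hprincipal⟩ := le_inf_iff.1 hU
  have hstable : ∀ᶠ T in U, Stable R T := Filter.le_principal_iff.1 hprincipal
  have hlimit : Stable R (ultralimit U) := hfin.stable_ultralimit hstable
  refine ⟨ultralimit U, fun hfinite => ?_, hlimit⟩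
  have heq : ∀ᶠ T in U, T = ultralimit U :=
    hlimit.naive.eventually_eq_ultralimit hfinite (hstable.mono fun _ hT => hT.1)
  have hne : ∀ᶠ T in U, T ≠ ultralimit U := hcofinite (Filter.eventually_cofinite_ne _)
  obtain ⟨T, hT, hT'⟩ := (heq.and hne).exists
  exact hT' hT

theorem infinitely_many_finite_stable_implies_infinite_stable
    (R : α → α → Prop) (hfin : Finitary R)
    (h : {S : Set α | Stable R S ∧ S.Finite}.Infinite) :
    ∃ S : Set α, S.Infinite ∧ Stable R S :=
  infinitely_many_finite_stable_implies_infinite_stable_general R hfin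
    (h.mono fun _ hS => hS.1)

end AF
end

section
/- Let F = (A, R) be an argumentation framework. Every admissible extension of F is contained in a complete extension of F. -/
namespace AF

variable {α : Type*}

/-- Dung's characteristic function: the set of arguments defended by `S`. Admissible extensions are
its conflict-free post-fixed points, and complete extensions its conflict-free fixed points. -/
def defended (R : α → α → Prop) (S : Set α) : Set α :=
  {a | Defends R S a}

section

variable {R : α → α → Prop} {S : Set α}

theorem defended_mono : Monotone (defended R) := by
  intro S T hST a ha x hxa
  obtain ⟨y, hyS, hyx⟩ := ha x hxa
  exact ⟨y, hST hyS, hyx⟩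

theorem Admissible.subset_defended (hS : Admissible R S) : S ⊆ defended R S :=
  hS.2

theorem ConflictFree.defended (hS : ConflictFree R S) : ConflictFree R (defended R S) := by
  intro a ha b hb hab
  obtain ⟨c, hcS, hca⟩ := hb a hab
  obtain ⟨d, hdS, hdc⟩ := ha c hca
  exact hS d hdS c hcS hdc

theorem Admissible.defended (hS : Admissible R S) : Admissible R (defended R S) :=
  ⟨hS.1.defended, defended_mono hS.subset_defended⟩

theorem conflictFree_sUnion {C : Set (Set α)} (hdir : DirectedOn (· ⊆ ·) C)
    (hC : ∀ S ∈ C, ConflictFree R S) : ConflictFree R (⋃₀ C) := by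
  rintro a ⟨S, hSC, haS⟩ b ⟨T, hTC, hbT⟩
  obtain ⟨U, hUC, hSU, hTU⟩ := hdir S hSC T hTC
  exact hC U hUC a (hSU haS) b (hTU hbT)

theorem admissible_sUnion {C : Set (Set α)} (hdir : DirectedOn (· ⊆ ·) C)
    (hC : ∀ S ∈ C, Admissible R S) : Admissible R (⋃₀ C) := by
  refine ⟨conflictFree_sUnion hdir fun S hSC => (hC S hSC).1, ?_⟩
  rintro a ⟨S, hSC, haS⟩
  exact defended_mono (Set.subset_sUnion_of_mem hSC) ((hC S hSC).subset_defended haS)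

theorem Admissible.exists_maximal_superset (hS : Admissible R S) :
    ∃ T, S ⊆ T ∧ Maximal (Admissible R) T :=
  zorn_subset_nonempty {T | Admissible R T}
    (fun C hC hchain _ =>
      ⟨⋃₀ C, admissible_sUnion hchain.directedOn hC, fun _ => Set.subset_sUnion_of_mem⟩)
    S hS

theorem complete_of_maximal_admissible (hS : Maximal (Admissible R) S) : Complete R S :=
  ⟨hS.prop.1, hS.eq_of_subset hS.prop.defended hS.prop.subset_defended⟩

end

theorem admissible_subset_complete
    (R : α → α → Prop) (S : Set α) (hS : Admissible R S) :
    ∃ T : Set α, Complete R T ∧ S ⊆ T := by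
  obtain ⟨T, hST, hT⟩ := hS.exists_maximal_superset
  exact ⟨T, complete_of_maximal_admissible hT, hST⟩

end AF
end
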